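/- arXiv:1908.09193 — 2 statements merged into one kernel-verified Lean document; each statement's English description precedes it below -/
import Mathlib

section
/- Let D = ([0,1] × [1,2]) ∪ [0,1]² ∪ ([1,2] × [0,1]) ⊂ ℝ² and D' = ([−1,0] × [0,1]) ∪ [0,1]² ∪ ([1,2] × [0,1]) ⊂ ℝ². Then there exists a bilipschitz homeomorphism φ : D → D' such that φ restricted to {2} × [0,1] is the identity and φ restricted to [0,1] × {2} is an isometry onto {−1} × [0,1]. -/
open Set

noncomputable section

/-- ℝ² with the Euclidean metric. -/
abbrev E2 := EuclideanSpace ℝ (Fin 2)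

/-- The L-shaped union of three unit squares
`D = ([0,1] × [1,2]) ∪ [0,1]² ∪ ([1,2] × [0,1])`. -/
def Dset : Set E2 :=
  {x | (x 0 ∈ Icc (0:ℝ) 1 ∧ x 1 ∈ Icc (1:ℝ) 2) ∨ (x 0 ∈ Icc (0:ℝ) 1 ∧ x 1 ∈ Icc (0:ℝ) 1) ∨
    (x 0 ∈ Icc (1:ℝ) 2 ∧ x 1 ∈ Icc (0:ℝ) 1)}

/-- The straight row of three unit squares
`D' = ([−1,0] × [0,1]) ∪ [0,1]² ∪ ([1,2] × [0,1])`. -/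
def D'set : Set E2 :=
  {x | (x 0 ∈ Icc (-1:ℝ) 0 ∧ x 1 ∈ Icc (0:ℝ) 1) ∨ (x 0 ∈ Icc (0:ℝ) 1 ∧ x 1 ∈ Icc (0:ℝ) 1) ∨
    (x 0 ∈ Icc (1:ℝ) 2 ∧ x 1 ∈ Icc (0:ℝ) 1)}

/-- The segment `{2} × [0,1]`. -/
def segTwo : Set E2 := {x | x 0 = 2 ∧ x 1 ∈ Icc (0:ℝ) 1}

/-- The segment `[0,1] × {2}`. -/
def segTop : Set E2 := {x | x 0 ∈ Icc (0:ℝ) 1 ∧ x 1 = 2}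

/-- The segment `{−1} × [0,1]`. -/
def segLeft : Set E2 := {x | x 0 = -1 ∧ x 1 ∈ Icc (0:ℝ) 1}

/-!
In the coordinates `u = x 0 - x 1` and `v = min (x 0) (x 1)` of the plane, the horizontal segment of
`D` ending at `(2, v)` and the vertical one ending at `(v, 2)` form the single segment
`|u| ≤ 2 - v`, so that `D` becomes a trapezoid over `0 ≤ v ≤ 1`. Stretching `u` by the factor `2`
on `|u| ≤ v` and translating the rest accordingly turns this segment into `[-2, 2]`, for every `v`,
and an affine map carries the resulting rectangle to `D'`. All these maps are piecewise linear
homeomorphisms of the whole plane.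
-/

section Bilipschitz

variable {α β γ : Type*}

/-- A map is bilipschitz if it is Lipschitz and its inverse on its range is Lipschitz; the two
constants may differ. -/
def IsBilipschitz [PseudoEMetricSpace α] [PseudoEMetricSpace β] (f : α → β) : Prop :=
  (∃ K, LipschitzWith K f) ∧ ∃ K, AntilipschitzWith K f

namespace IsBilipschitz

section PseudoEMetricSpace

variable [PseudoEMetricSpace α] [PseudoEMetricSpace β] [PseudoEMetricSpace γ]

lemma of_leftInverse {f : α → β} {g : β → α} (hf : ∃ K, LipschitzWith K f)
    (hg : ∃ K, LipschitzWith K g) (hgf : Function.LeftInverse g f) : IsBilipschitz f :=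
  ⟨hf, hg.imp fun _ hg => hg.to_rightInverse hgf⟩

lemma comp {g : β → γ} {f : α → β} (hg : IsBilipschitz g) (hf : IsBilipschitz f) :
    IsBilipschitz (g ∘ f) := by
  obtain ⟨⟨K, hf⟩, K', hf'⟩ := hf
  obtain ⟨⟨M, hg⟩, M', hg'⟩ := hg
  exact ⟨⟨_, hg.comp hf⟩, _, hg'.comp hf'⟩

lemma continuous {f : α → β} (hf : IsBilipschitz f) : Continuous f :=
  let ⟨⟨_, hK⟩, _⟩ := hf
  hK.continuous

end PseudoEMetricSpace

lemma exists_dist_bounds [PseudoMetricSpace α] [PseudoMetricSpace β] {f : α → β}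
    (hf : IsBilipschitz f) :
    ∃ L : ℝ, 1 ≤ L ∧ ∀ a b,
      L⁻¹ * dist a b ≤ dist (f a) (f b) ∧ dist (f a) (f b) ≤ L * dist a b := by
  obtain ⟨⟨K, hK⟩, K', hK'⟩ := hf
  have hL : (1 : ℝ) ≤ max 1 (max K K') := le_max_left _ _
  refine ⟨_, hL, fun a b => ⟨?_, ?_⟩⟩
  · rw [inv_mul_le_iff₀ (one_pos.trans_le hL)]
    refine (hK'.le_mul_dist a b).trans ?_
    gcongr
    exact (le_max_right _ _).trans (le_max_right _ _)
  · refine (hK.dist_le_mul a b).trans ?_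
    gcongr
    exact (le_max_left _ _).trans (le_max_right _ _)

end IsBilipschitz

lemma exists_lipschitzWith_piLp {ι : Type*} [Fintype ι] {E : ι → Type*}
    [∀ i, PseudoEMetricSpace (E i)] [PseudoEMetricSpace α] {p : ENNReal} [Fact (1 ≤ p)]
    {f : α → PiLp p E} (hf : ∀ i, ∃ K, LipschitzWith K fun x => f x i) :
    ∃ K, LipschitzWith K f := by
  choose K hK using hf
  have hpi : LipschitzWith (Finset.univ.sup K) fun x i => f x i := fun x y =>
    edist_pi_le_iff.2 fun i => (hK i).weaken (Finset.le_sup (Finset.mem_univ i)) x y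
  exact ⟨_, (PiLp.lipschitzWith_toLp p E).comp hpi⟩

lemma lipschitzWith_piLp_apply {ι : Type*} [Fintype ι] {E : ι → Type*}
    [∀ i, PseudoEMetricSpace (E i)] (p : ENNReal) [Fact (1 ≤ p)] (i : ι) :
    LipschitzWith 1 fun x : PiLp p E => x i := by
  simpa using! (LipschitzWith.eval i).comp (PiLp.lipschitzWith_ofLp p E)

end Bilipschitz

section Stretch

/-- The truncation of `u` to the interval `[-v, v]`. For `v < 0`, where this interval is empty, the
value is `-v`, which keeps `stretch v` bijective. -/
def clamp (v u : ℝ) : ℝ := max (-v) (min u v)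

lemma clamp_mono (v : ℝ) : Monotone (clamp v) := fun _ _ h =>
  max_le_max_left _ (min_le_min_right _ h)

lemma clamp_of_le {v u : ℝ} (hv : 0 ≤ v) (hu : v ≤ u) : clamp v u = v := by
  rw [clamp, min_eq_right hu, max_eq_right (neg_le_self hv)]

lemma clamp_neg {v : ℝ} (hv : 0 ≤ v) (u : ℝ) : clamp v (-u) = -clamp v u := by
  unfold clamp
  grind

lemma clamp_half_add_clamp (v u : ℝ) : clamp v ((u + clamp v u) / 2) = clamp v u := by
  unfold clamp
  grind

lemma clamp_sub_clamp_half (v w : ℝ) : clamp v (w - clamp v (w / 2)) = clamp v (w / 2) := by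
  unfold clamp
  grind

/-- The piecewise linear homeomorphism `u ↦ u + clamp v u` of the line. For `0 ≤ v` it has slope `2`
on `[-v, v]` and slope `1` elsewhere, and it maps `[-r, r]` onto `[-(r + v), r + v]` if `v ≤ r`. -/
def stretch (v : ℝ) : ℝ ≃ ℝ where
  toFun u := u + clamp v u
  invFun w := w - clamp v (w / 2)
  left_inv u := by simp [clamp_half_add_clamp]
  right_inv w := by simp [clamp_sub_clamp_half]

lemma stretch_apply (v u : ℝ) : stretch v u = u + clamp v u := rfl

lemma stretch_strictMono (v : ℝ) : StrictMono (stretch v) :=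
  strictMono_id.add_monotone (clamp_mono v)

lemma stretch_of_le {v u : ℝ} (hv : 0 ≤ v) (hu : v ≤ u) : stretch v u = u + v := by
  rw [stretch_apply, clamp_of_le hv hu]

lemma stretch_neg {v : ℝ} (hv : 0 ≤ v) (u : ℝ) : stretch v (-u) = -stretch v u := by
  rw [stretch_apply, stretch_apply, clamp_neg hv, neg_add]

lemma abs_stretch_le_iff {v r u : ℝ} (hv : 0 ≤ v) (hr : v ≤ r) :
    |stretch v u| ≤ r + v ↔ |u| ≤ r := by
  rw [← stretch_of_le hv hr, abs_le, ← stretch_neg hv, (stretch_strictMono v).le_iff_le,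
    (stretch_strictMono v).le_iff_le, abs_le]

variable {α : Type*} [PseudoEMetricSpace α] {f g : α → ℝ} {K M : NNReal}

lemma exists_lipschitzWith_clamp (hf : LipschitzWith K f) (hg : LipschitzWith M g) :
    ∃ C, LipschitzWith C fun x => clamp (f x) (g x) :=
  ⟨_, hf.neg.max (hg.min hf)⟩

lemma exists_lipschitzWith_stretch (hf : LipschitzWith K f) (hg : LipschitzWith M g) :
    ∃ C, LipschitzWith C fun x => stretch (f x) (g x) :=
  let ⟨_, h⟩ := exists_lipschitzWith_clamp hf hg
  ⟨_, hg.add h⟩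

lemma exists_lipschitzWith_stretch_symm (hf : LipschitzWith K f) (hg : LipschitzWith M g) :
    ∃ C, LipschitzWith C fun x => (stretch (f x)).symm (g x) :=
  let ⟨_, h⟩ := exists_lipschitzWith_clamp hf ((lipschitzWith_smul (2⁻¹ : ℝ)).comp hg)
  ⟨_, by simpa [stretch, div_eq_inv_mul] using hg.sub h⟩

end Stretch

lemma E2.ext {x y : E2} (h₀ : x 0 = y 0) (h₁ : x 1 = y 1) : x = y :=
  PiLp.ext (Fin.forall_fin_two.2 ⟨h₀, h₁⟩)

lemma E2.exists_lipschitzWith {α : Type*} [PseudoEMetricSpace α] {f : α → E2}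
    (h₀ : ∃ K, LipschitzWith K fun x => f x 0) (h₁ : ∃ K, LipschitzWith K fun x => f x 1) :
    ∃ K, LipschitzWith K f :=
  exists_lipschitzWith_piLp (Fin.forall_fin_two.2 ⟨h₀, h₁⟩)

/-- The change of coordinates `x ↦ (u, v) = (x 0 - x 1, min (x 0) (x 1))` of the plane, which
lays `D` out as a trapezoid. -/
def diagonalCoords : E2 ≃ E2 where
  toFun x := !₂[x 0 - x 1, min (x 0) (x 1)]
  invFun p := !₂[p 1 + (p 0)⁺, p 1 + (p 0)⁻]
  left_inv x := by
    apply E2.ext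
    · change min (x 0) (x 1) + (x 0 - x 1)⁺ = x 0
      rw [inf_eq_sub_posPart_sub, sub_add_cancel]
    · change min (x 0) (x 1) + (x 0 - x 1)⁻ = x 1
      rw [min_comm, inf_eq_sub_posPart_sub, ← neg_sub (x 1), negPart_neg, sub_add_cancel]
  right_inv p := by
    apply E2.ext
    · change p 1 + (p 0)⁺ - (p 1 + (p 0)⁻) = p 0
      rw [add_sub_add_left_eq_sub, posPart_sub_negPart]
    · change min (p 1 + (p 0)⁺) (p 1 + (p 0)⁻) = p 1
      rw [min_add_add_left, posPart_inf_negPart_eq_zero, add_zero]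

/-- The image of `D` in the coordinates `diagonalCoords`. -/
def trapezoid : Set E2 := {p | |p 0| ≤ 2 - p 1 ∧ p 1 ∈ Icc 0 1}

/-- The straightening at each height `p 1 = v`: `stretch v` makes all the segments `|p 0| ≤ 2 - v`
equally long, and `t ↦ 3 / 4 * t + 1 / 2` maps the resulting segment `[-2, 2]` onto `[-1, 2]`. -/
def widen : E2 ≃ E2 where
  toFun p := !₂[3 / 4 * stretch (p 1) (p 0) + 1 / 2, p 1]
  invFun y := !₂[(stretch (y 1)).symm (4 / 3 * (y 0 - 1 / 2)), y 1]
  left_inv p := by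
    refine E2.ext ?_ rfl
    change (stretch (p 1)).symm (4 / 3 * (3 / 4 * stretch (p 1) (p 0) + 1 / 2 - 1 / 2)) = p 0
    rw [Equiv.symm_apply_eq]
    ring
  right_inv y := by
    refine E2.ext ?_ rfl
    change 3 / 4 * stretch (y 1) ((stretch (y 1)).symm (4 / 3 * (y 0 - 1 / 2))) + 1 / 2 = y 0
    rw [Equiv.apply_symm_apply]
    ring

/-- The bilipschitz homeomorphism of the plane whose restriction to `D` is the map `φ : D → D'`. -/
def straighten : E2 ≃ E2 := diagonalCoords.trans widen

lemma straighten_zero (x : E2) :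
    straighten x 0 = 3 / 4 * stretch (min (x 0) (x 1)) (x 0 - x 1) + 1 / 2 := rfl

lemma straighten_one (x : E2) : straighten x 1 = min (x 0) (x 1) := rfl

lemma isBilipschitz_diagonalCoords : IsBilipschitz diagonalCoords := by
  have h₀ : LipschitzWith 1 fun x : E2 => x 0 := lipschitzWith_piLp_apply 2 0
  have h₁ : LipschitzWith 1 fun x : E2 => x 1 := lipschitzWith_piLp_apply 2 1
  refine .of_leftInverse ?_ ?_ diagonalCoords.left_inv
  · exact E2.exists_lipschitzWith ⟨_, h₀.sub h₁⟩ ⟨_, h₀.min h₁⟩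
  · exact E2.exists_lipschitzWith ⟨_, h₁.add (lipschitzWith_posPart.comp h₀)⟩
      ⟨_, h₁.add (lipschitzWith_negPart.comp h₀)⟩

lemma isBilipschitz_widen : IsBilipschitz widen := by
  have h₀ : LipschitzWith 1 fun x : E2 => x 0 := lipschitzWith_piLp_apply 2 0
  have h₁ : LipschitzWith 1 fun x : E2 => x 1 := lipschitzWith_piLp_apply 2 1
  obtain ⟨_, h_stretch⟩ := exists_lipschitzWith_stretch h₁ h₀
  have h_affine := (lipschitzWith_smul (4 / 3 : ℝ)).comp (h₀.sub (.const (1 / 2)))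
  refine .of_leftInverse ?_ ?_ widen.left_inv
  · exact E2.exists_lipschitzWith
      ⟨_, ((lipschitzWith_smul (3 / 4 : ℝ)).comp h_stretch).add (.const (1 / 2))⟩ ⟨_, h₁⟩
  · exact E2.exists_lipschitzWith (exists_lipschitzWith_stretch_symm h₁ h_affine) ⟨_, h₁⟩

lemma isBilipschitz_straighten : IsBilipschitz straighten :=
  isBilipschitz_widen.comp isBilipschitz_diagonalCoords

lemma mem_Dset_iff {x : E2} :
    x ∈ Dset ↔ max (x 0) (x 1) ≤ 2 ∧ min (x 0) (x 1) ∈ Icc 0 1 := by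
  simp only [Dset, mem_ofPred_eq, mem_Icc]
  grind

lemma mem_D'set_iff {y : E2} : y ∈ D'set ↔ y 0 ∈ Icc (-1) 2 ∧ y 1 ∈ Icc 0 1 := by
  simp only [D'set, mem_ofPred_eq, mem_Icc]
  grind

lemma diagonalCoords_mem_trapezoid_iff {x : E2} :
    diagonalCoords x ∈ trapezoid ↔ x ∈ Dset := by
  change |x 0 - x 1| ≤ 2 - min (x 0) (x 1) ∧ min (x 0) (x 1) ∈ Icc 0 1 ↔ x ∈ Dset
  rw [mem_Dset_iff, ← max_sub_min_eq_abs', sub_le_sub_iff_right]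

lemma widen_mem_D'set_iff {p : E2} : widen p ∈ D'set ↔ p ∈ trapezoid := by
  rw [mem_D'set_iff]
  change _ ∧ p 1 ∈ Icc 0 1 ↔ _ ∧ p 1 ∈ Icc 0 1
  refine and_congr_left fun ⟨h_nonneg, h_le_one⟩ => ?_
  change 3 / 4 * stretch (p 1) (p 0) + 1 / 2 ∈ Icc (-1) 2 ↔ |p 0| ≤ 2 - p 1
  rw [← abs_stretch_le_iff h_nonneg (by linarith), sub_add_cancel, abs_le]
  constructor <;> rintro ⟨_, _⟩ <;> constructor <;> linarith

lemma bijOn_straighten : BijOn straighten Dset D'set :=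
  straighten.bijOn fun _ => widen_mem_D'set_iff.trans diagonalCoords_mem_trapezoid_iff

lemma straighten_of_mem_segTwo {x : E2} (hx : x ∈ segTwo) : straighten x = x := by
  obtain ⟨h₀, h_nonneg, h_le_one⟩ := hx
  have h_min : min (x 0) (x 1) = x 1 := min_eq_right (by linarith)
  apply E2.ext
  · rw [straighten_zero, h_min, stretch_of_le h_nonneg (by linarith)]
    linarith
  · rw [straighten_one, h_min]

lemma straighten_of_mem_segTop {x : E2} (hx : x ∈ segTop) : straighten x = !₂[-1, x 0] := by
  obtain ⟨⟨h_nonneg, h_le_one⟩, h₁⟩ := hx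
  have h_min : min (x 0) (x 1) = x 0 := min_eq_left (by linarith)
  apply E2.ext
  · change straighten x 0 = -1
    rw [straighten_zero, h_min, ← neg_sub, stretch_neg h_nonneg,
      stretch_of_le h_nonneg (by linarith)]
    linarith
  · exact h_min

lemma image_straighten_segTop : straighten '' segTop = segLeft := by
  rw [image_congr fun _ => straighten_of_mem_segTop]
  apply Subset.antisymm
  · rintro _ ⟨x, hx, rfl⟩
    exact ⟨rfl, hx.1⟩
  · rintro y ⟨h₀, h₁⟩
    exact ⟨!₂[y 1, 2], ⟨h₁, rfl⟩, E2.ext h₀.symm rfl⟩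

lemma dist_straighten_of_mem_segTop {a b : E2} (ha : a ∈ segTop) (hb : b ∈ segTop) :
    dist (straighten a) (straighten b) = dist a b := by
  rw [straighten_of_mem_segTop ha, straighten_of_mem_segTop hb, EuclideanSpace.dist_eq,
    EuclideanSpace.dist_eq]
  simp [Fin.sum_univ_two, ha.2, hb.2]

/-- There is a bilipschitz homeomorphism `φ : D → D'` which is the identity on
`{2} × [0,1]` and an isometry of `[0,1] × {2}` onto `{−1} × [0,1]`. -/
theorem exists_bilipschitz_straightening :
    ∃ φ : E2 → E2,
      Set.BijOn φ Dset D'set ∧ ContinuousOn φ Dset ∧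
      (∃ L : ℝ, 1 ≤ L ∧ ∀ a ∈ Dset, ∀ b ∈ Dset,
        L⁻¹ * dist a b ≤ dist (φ a) (φ b) ∧ dist (φ a) (φ b) ≤ L * dist a b) ∧
      (∀ x ∈ segTwo, φ x = x) ∧
      φ '' segTop = segLeft ∧
      (∀ a ∈ segTop, ∀ b ∈ segTop, dist (φ a) (φ b) = dist a b) := by
  obtain ⟨L, hL, h_dist⟩ := isBilipschitz_straighten.exists_dist_bounds
  exact ⟨straighten, bijOn_straighten, isBilipschitz_straighten.continuous.continuousOn,
    ⟨L, hL, fun a _ b _ => h_dist a b⟩, fun _ => straighten_of_mem_segTwo,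
    image_straighten_segTop, fun _ ha _ hb => dist_straighten_of_mem_segTop ha hb⟩
end
end

section
/- Let f : ℝ³ → ℝ³ be an orientation-preserving homeomorphism with f ∘ f = id which is locally bilipschitz on the complement of a closed Lebesgue-null set E ⊂ ℝ³ satisfying f(E) = E. Then f is differentiable almost everywhere with Jacobian determinant J_f = det Df > 0 a.e., and for every p ∈ [1, 2) the identity ∫_{ℝ³} |Df(x)|^p dx = ∫_{ℝ³} |D^♯f(y)|^p / J_f(y)^{p−1} dy holds (both sides possibly infinite), where D^♯f denotes the adjugate (cofactor) matrix of the differential Df. -/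
open MeasureTheory Set

noncomputable section

/-- ℝ³ with the Euclidean metric and Lebesgue measure. -/
abbrev E3 := EuclideanSpace ℝ (Fin 3)

/-- The Jacobian determinant `J_f(x) = det Df(x)` of `f` at `x`. -/
def jacDet (f : E3 → E3) (x : E3) : ℝ := (fderiv ℝ f x).det

/-- The operator norm of (the linear map associated to) the adjugate (cofactor) matrix
`D^♯f(x)` of the differential `Df(x)`. -/
def adjugateNorm (f : E3 → E3) (x : E3) : ℝ :=
  ‖Matrix.toEuclideanCLM (𝕜 := ℝ)
    ((LinearMap.toMatrix (EuclideanSpace.basisFun (Fin 3) ℝ).toBasis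
      (EuclideanSpace.basisFun (Fin 3) ℝ).toBasis (fderiv ℝ f x)).adjugate)‖

/-- A homeomorphism `f : ℝ³ → ℝ³` is orientation-preserving when `det Df(x) ≥ 0` at every
point of differentiability. -/
def OrientPreserving (f : E3 → E3) : Prop :=
  ∀ x : E3, DifferentiableAt ℝ f x → 0 ≤ jacDet f x

/-!
Where `f` is bilipschitz, Rademacher's theorem makes it differentiable almost everywhere, and the
lower Lipschitz bound makes the differential invertible. Because `f ∘ f = id`, the set of points
with invertible differential is mapped onto itself and `Df (f y) = (Df y)⁻¹` there. Changing
variables `x = f y` turns `∫ ‖Df x‖ ^ p dx` into `∫ |J_f y| * ‖(Df y)⁻¹‖ ^ p dy`, and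
`(Df y)⁻¹` is the adjugate of `Df y` divided by `J_f y`.
-/

open Filter Module
open scoped ENNReal NNReal Topology

section Adjugate

variable {𝕜 V ι : Type*} [NontriviallyNormedField 𝕜] [CompleteSpace 𝕜] [NormedAddCommGroup V]
  [NormedSpace 𝕜 V] [FiniteDimensional 𝕜 V]

lemma isInvertible_of_injective {A : V →L[𝕜] V} (hA : Function.Injective A) : A.IsInvertible :=
  ⟨(LinearEquiv.ofInjectiveEndo (A : V →ₗ[𝕜] V) hA).toContinuousLinearEquiv, rfl⟩

lemma isInvertible_iff_det_ne_zero {A : V →L[𝕜] V} : A.IsInvertible ↔ A.det ≠ 0 := by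
  refine ⟨?_, fun hA => ⟨A.toContinuousLinearEquivOfDetNeZero hA,
    A.coe_toContinuousLinearEquivOfDetNeZero hA⟩⟩
  rintro ⟨e, rfl⟩
  exact e.toLinearEquiv.isUnit_det'.ne_zero

variable [Fintype ι] [DecidableEq ι]

/-- The adjugate of an endomorphism `A`: the endomorphism whose matrix in the basis `b` is the
adjugate of the matrix of `A`. It does not depend on `b`, which only serves to pass to matrices. -/
def adjugateCLM (b : Basis ι 𝕜 V) (A : V →L[𝕜] V) : V →L[𝕜] V :=
  LinearMap.toContinuousLinearMap (Matrix.toLin b b (LinearMap.toMatrix b b A).adjugate)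

lemma adjugateCLM_comp_self (b : Basis ι 𝕜 V) (A : V →L[𝕜] V) :
    adjugateCLM b A ∘L A = A.det • ContinuousLinearMap.id 𝕜 V := by
  apply ContinuousLinearMap.coe_injective
  apply (LinearMap.toMatrix b b).injective
  calc LinearMap.toMatrix b b (Matrix.toLin b b (LinearMap.toMatrix b b A).adjugate ∘ₗ A)
      = (LinearMap.toMatrix b b A).adjugate * LinearMap.toMatrix b b A := by
        rw [LinearMap.toMatrix_comp b b b, LinearMap.toMatrix_toLin]
    _ = A.det • LinearMap.toMatrix b b LinearMap.id := by
        rw [Matrix.adjugate_mul, LinearMap.det_toMatrix, LinearMap.toMatrix_id]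
    _ = LinearMap.toMatrix b b (A.det • LinearMap.id) := (map_smul _ _ _).symm

lemma adjugateCLM_eq_det_smul_inverse (b : Basis ι 𝕜 V) {A : V →L[𝕜] V} (hA : A.IsInvertible) :
    adjugateCLM b A = A.det • A.inverse :=
  calc adjugateCLM b A = (adjugateCLM b A ∘L A) ∘L A.inverse := by
        rw [ContinuousLinearMap.comp_assoc, hA.self_comp_inverse, ContinuousLinearMap.comp_id]
    _ = A.det • A.inverse := by
        rw [adjugateCLM_comp_self, ContinuousLinearMap.smul_comp, ContinuousLinearMap.id_comp]

end Adjugate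

lemma norm_adjugateCLM_rpow_div_abs_det_rpow {V ι : Type*} [NormedAddCommGroup V]
    [NormedSpace ℝ V] [FiniteDimensional ℝ V] [Fintype ι] [DecidableEq ι] (b : Basis ι ℝ V)
    {A : V →L[ℝ] V} (hA : A.IsInvertible) (p : ℝ) :
    ‖adjugateCLM b A‖ ^ p / |A.det| ^ (p - 1) = |A.det| * ‖A.inverse‖ ^ p := by
  have hdet : 0 < |A.det| := abs_pos.2 (isInvertible_iff_det_ne_zero.1 hA)
  rw [adjugateCLM_eq_det_smul_inverse b hA, norm_smul, Real.norm_eq_abs,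
    Real.mul_rpow hdet.le (norm_nonneg _), mul_div_right_comm, ← Real.rpow_sub hdet,
    sub_sub_cancel, Real.rpow_one]

lemma adjugateNorm_eq_norm_adjugateCLM (f : E3 → E3) (x : E3) :
    adjugateNorm f x =
      ‖adjugateCLM (EuclideanSpace.basisFun (Fin 3) ℝ).toBasis (fderiv ℝ f x)‖ := by
  refine congrArg norm (ContinuousLinearMap.coe_injective ?_)
  rw [Matrix.coe_toEuclideanCLM_eq_toEuclideanLin, Matrix.toEuclideanLin_eq_toLin_orthonormal]
  rfl

section Bilipschitz

/-- `f` is bilipschitz on some neighborhood of `x`, with the same constant for both bounds. -/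
def IsBilipschitzNear {X Y : Type*} [PseudoMetricSpace X] [PseudoMetricSpace Y] (f : X → Y)
    (x : X) : Prop :=
  ∃ U ∈ 𝓝 x, ∃ L : ℝ, 0 < L ∧ ∀ a ∈ U, ∀ b ∈ U,
    L⁻¹ * dist a b ≤ dist (f a) (f b) ∧ dist (f a) (f b) ≤ L * dist a b

lemma IsBilipschitzNear.exists_lipschitzOnWith {X Y : Type*} [PseudoMetricSpace X]
    [PseudoMetricSpace Y] {f : X → Y} {x : X} (h : IsBilipschitzNear f x) :
    ∃ K : ℝ≥0, ∃ U ∈ 𝓝 x, LipschitzOnWith K f U := by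
  obtain ⟨U, hU, L, hL, hdist⟩ := h
  exact ⟨⟨L, hL.le⟩, U, hU, .of_dist_le_mul fun a ha b hb => (hdist a ha b hb).2⟩

lemma mul_norm_le_norm_apply_of_hasFDerivAt {𝕜 V W : Type*} [NontriviallyNormedField 𝕜]
    [NormedAddCommGroup V] [NormedSpace 𝕜 V] [NormedAddCommGroup W] [NormedSpace 𝕜 W]
    {f : V → W} {A : V →L[𝕜] W} {x : V} {c : ℝ} (hf : HasFDerivAt f A x)
    (hc : ∀ᶠ y in 𝓝 x, c * ‖y - x‖ ≤ ‖f y - f x‖) (v : V) : c * ‖v‖ ≤ ‖A v‖ := by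
  have hslope : Tendsto (fun t : 𝕜 => ‖t⁻¹ • (f (x + t • v) - f x)‖) (𝓝[≠] 0) (𝓝 ‖A v‖) := by
    simpa only [zero_add, zero_smul, add_zero] using
      (hasDerivAt_iff_tendsto_slope_zero.1 (hf.hasLineDerivAt v)).norm
  have hline : Tendsto (fun t : 𝕜 => x + t • v) (𝓝[≠] 0) (𝓝 x) := by
    have hcont : Continuous fun t : 𝕜 => x + t • v := by fun_prop
    simpa only [zero_smul, add_zero] using (hcont.tendsto 0).mono_left nhdsWithin_le_nhds
  refine ge_of_tendsto hslope ?_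
  filter_upwards [hline.eventually hc, self_mem_nhdsWithin] with t ht ht0
  rw [add_sub_cancel_left, norm_smul] at ht
  rw [norm_smul, norm_inv, le_inv_mul_iff₀ (norm_pos_iff.2 ht0)]
  linarith

variable {V : Type*} [NormedAddCommGroup V] [NormedSpace ℝ V] [FiniteDimensional ℝ V] {f : V → V}

lemma IsBilipschitzNear.isInvertible_fderiv {x : V} (h : IsBilipschitzNear f x)
    (hf : DifferentiableAt ℝ f x) : (fderiv ℝ f x).IsInvertible := by
  obtain ⟨U, hU, L, hL, hdist⟩ := h
  have hlower (v : V) : L⁻¹ * ‖v‖ ≤ ‖fderiv ℝ f x v‖ := by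
    refine mul_norm_le_norm_apply_of_hasFDerivAt hf.hasFDerivAt ?_ v
    filter_upwards [hU] with y hy
    simpa only [dist_eq_norm] using (hdist y hy x (mem_of_mem_nhds hU)).1
  refine isInvertible_of_injective ((injective_iff_map_eq_zero _).2 fun v hv => ?_)
  have hv_le : L⁻¹ * ‖v‖ ≤ 0 := by simpa only [hv, norm_zero] using hlower v
  exact norm_le_zero_iff.1 (nonpos_of_mul_nonpos_right hv_le (inv_pos.2 hL))

variable [MeasurableSpace V] [BorelSpace V] {μ : Measure V} [μ.IsAddHaarMeasure]

lemma ae_differentiableAt_of_ae_lipschitzOnWith {W : Type*} [NormedAddCommGroup W]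
    [NormedSpace ℝ W] [FiniteDimensional ℝ W] {f : V → W}
    (hf : ∀ᵐ x ∂μ, ∃ K : ℝ≥0, ∃ U ∈ 𝓝 x, LipschitzOnWith K f U) :
    ∀ᵐ x ∂μ, DifferentiableAt ℝ f x := by
  suffices hnull : μ {x | (∃ K : ℝ≥0, ∃ U ∈ 𝓝 x, LipschitzOnWith K f U) ∧
      ¬ DifferentiableAt ℝ f x} = 0 by
    filter_upwards [hf, measure_eq_zero_iff_ae_notMem.1 hnull] with x hx hxd
    exact not_not.1 fun hnd => hxd ⟨hx, hnd⟩
  refine measure_null_of_locally_null _ fun x ⟨⟨K, U, hU, hK⟩, _⟩ =>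
    ⟨_, inter_mem_nhdsWithin _ (interior_mem_nhds.2 hU), ?_⟩
  refine measure_mono_null ?_ (ae_iff.1 (hK.ae_differentiableWithinAt_of_mem (μ := μ)))
  exact fun y hy hyd => hy.1.2 <| (hyd (interior_subset hy.2)).differentiableAt
    (mem_interior_iff_mem_nhds.1 hy.2)

lemma ae_isInvertible_fderiv_of_ae_isBilipschitzNear (hf : ∀ᵐ x ∂μ, IsBilipschitzNear f x) :
    ∀ᵐ x ∂μ, (fderiv ℝ f x).IsInvertible := by
  have hdiff : ∀ᵐ x ∂μ, DifferentiableAt ℝ f x :=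
    ae_differentiableAt_of_ae_lipschitzOnWith (hf.mono fun _ hx => hx.exists_lipschitzOnWith)
  filter_upwards [hf, hdiff] with x hx hxd using hx.isInvertible_fderiv hxd

end Bilipschitz

section Involution

variable {V : Type*} [NormedAddCommGroup V] [NormedSpace ℝ V] {f : V → V}

lemma hasFDerivAt_inverse_of_involutive (hinv : Function.Involutive f) {x : V}
    (hcont : ContinuousAt f (f x)) (hx : (fderiv ℝ f x).IsInvertible) :
    HasFDerivAt f (fderiv ℝ f x).inverse (f x) := by
  have hdiff : HasFDerivAt f (fderiv ℝ f x) x :=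
    (differentiableAt_of_isInvertible_fderiv hx).hasFDerivAt
  obtain ⟨e, he⟩ := hx
  rw [← he, ContinuousLinearMap.inverse_equiv]
  refine HasFDerivAt.of_local_left_inverse hcont ?_ (.of_forall hinv)
  rwa [hinv x, he]

lemma image_setOf_isInvertible_fderiv_of_involutive (hcont : Continuous f)
    (hinv : Function.Involutive f) :
    f '' {x | (fderiv ℝ f x).IsInvertible} = {x | (fderiv ℝ f x).IsInvertible} := by
  have hmaps : MapsTo f {x | (fderiv ℝ f x).IsInvertible} {x | (fderiv ℝ f x).IsInvertible} := by
    intro x hx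
    rw [mem_ofPred_eq, (hasFDerivAt_inverse_of_involutive hinv hcont.continuousAt hx).fderiv]
    exact hx.inverse
  exact hmaps.image_subset.antisymm fun x hx => ⟨f x, hmaps hx, hinv x⟩

variable [FiniteDimensional ℝ V] [MeasurableSpace V] [BorelSpace V] {μ : Measure V}
  [μ.IsAddHaarMeasure]

lemma measurableSet_setOf_isInvertible_fderiv (f : V → V) :
    MeasurableSet {x | (fderiv ℝ f x).IsInvertible} := by
  have : CompleteSpace V := FiniteDimensional.complete ℝ V
  have hdet : Measurable fun x => (fderiv ℝ f x).det :=
    ContinuousLinearMap.continuous_det.measurable.comp (measurable_fderiv ℝ f)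
  simp only [isInvertible_iff_det_ne_zero]
  exact hdet (measurableSet_singleton 0).compl

lemma lintegral_comp_fderiv_of_involutive (hcont : Continuous f) (hinv : Function.Involutive f)
    (hf : ∀ᵐ x ∂μ, (fderiv ℝ f x).IsInvertible) (g : (V →L[ℝ] V) → ℝ≥0∞) :
    ∫⁻ x, g (fderiv ℝ f x) ∂μ =
      ∫⁻ y, ENNReal.ofReal |(fderiv ℝ f y).det| * g (fderiv ℝ f y).inverse ∂μ := by
  set S : Set V := {x | (fderiv ℝ f x).IsInvertible}
  have hS : MeasurableSet S := measurableSet_setOf_isInvertible_fderiv f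
  have hrestrict : μ.restrict S = μ := Measure.restrict_eq_self_of_ae_mem hf
  calc ∫⁻ x, g (fderiv ℝ f x) ∂μ
      = ∫⁻ x in f '' S, g (fderiv ℝ f x) ∂μ := by
        rw [image_setOf_isInvertible_fderiv_of_involutive hcont hinv, hrestrict]
    _ = ∫⁻ y in S, ENNReal.ofReal |(fderiv ℝ f y).det| * g (fderiv ℝ f (f y)) ∂μ :=
        lintegral_image_eq_lintegral_abs_det_fderiv_mul μ hS
          (fun x hx => (differentiableAt_of_isInvertible_fderiv hx).hasFDerivAt.hasFDerivWithinAt)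
          hinv.injective.injOn _
    _ = ∫⁻ y in S, ENNReal.ofReal |(fderiv ℝ f y).det| * g (fderiv ℝ f y).inverse ∂μ :=
        setLIntegral_congr_fun hS fun y hy => by
          rw [(hasFDerivAt_inverse_of_involutive hinv hcont.continuousAt hy).fderiv]
    _ = ∫⁻ y, ENNReal.ofReal |(fderiv ℝ f y).det| * g (fderiv ℝ f y).inverse ∂μ := by
        rw [hrestrict]

variable {ι : Type*} [Fintype ι] [DecidableEq ι]

lemma lintegral_norm_fderiv_rpow_of_involutive (b : Basis ι ℝ V) (hcont : Continuous f)
    (hinv : Function.Involutive f) (hf : ∀ᵐ x ∂μ, (fderiv ℝ f x).IsInvertible) (p : ℝ) :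
    ∫⁻ x, ENNReal.ofReal (‖fderiv ℝ f x‖ ^ p) ∂μ =
      ∫⁻ y, ENNReal.ofReal
        (‖adjugateCLM b (fderiv ℝ f y)‖ ^ p / |(fderiv ℝ f y).det| ^ (p - 1)) ∂μ := by
  rw [lintegral_comp_fderiv_of_involutive hcont hinv hf fun A => ENNReal.ofReal (‖A‖ ^ p)]
  refine lintegral_congr_ae ?_
  filter_upwards [hf] with y hy
  rw [norm_adjugateCLM_rpow_div_abs_det_rpow b hy, ENNReal.ofReal_mul (abs_nonneg _)]

theorem involution_adjugate_identity_general (b : Basis ι ℝ V) (hcont : Continuous f)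
    (hinv : Function.Involutive f) (hor : ∀ᵐ x ∂μ, DifferentiableAt ℝ f x → 0 ≤ (fderiv ℝ f x).det)
    (hf : ∀ᵐ x ∂μ, IsBilipschitzNear f x) :
    (∀ᵐ x ∂μ, DifferentiableAt ℝ f x) ∧
    (∀ᵐ x ∂μ, 0 < (fderiv ℝ f x).det) ∧
    ∀ p : ℝ, ∫⁻ x, ENNReal.ofReal (‖fderiv ℝ f x‖ ^ p) ∂μ =
      ∫⁻ y, ENNReal.ofReal
        (‖adjugateCLM b (fderiv ℝ f y)‖ ^ p / (fderiv ℝ f y).det ^ (p - 1)) ∂μ := by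
  have hreg : ∀ᵐ x ∂μ, (fderiv ℝ f x).IsInvertible :=
    ae_isInvertible_fderiv_of_ae_isBilipschitzNear hf
  have hdiff : ∀ᵐ x ∂μ, DifferentiableAt ℝ f x :=
    hreg.mono fun _ => differentiableAt_of_isInvertible_fderiv
  have hpos : ∀ᵐ x ∂μ, 0 < (fderiv ℝ f x).det := by
    filter_upwards [hreg, hdiff, hor] with x hx hxd hnonneg
    exact (hnonneg hxd).lt_of_ne' (isInvertible_iff_det_ne_zero.1 hx)
  refine ⟨hdiff, hpos, fun p => ?_⟩
  rw [lintegral_norm_fderiv_rpow_of_involutive b hcont hinv hreg]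
  refine lintegral_congr_ae ?_
  filter_upwards [hpos] with y hy
  rw [abs_of_pos hy]

end Involution

/-- Let `f : ℝ³ → ℝ³` be an orientation-preserving homeomorphism with `f ∘ f = id` which is
locally bilipschitz on the complement of a closed Lebesgue-null set `E` with `f(E) = E`.
Then `f` is differentiable a.e. with `J_f > 0` a.e., and for every `p ∈ [1,2)`
`∫ |Df|^p = ∫ |D^♯f|^p / J_f^{p−1}` (both sides possibly infinite). -/
theorem involution_adjugate_identity
    (f : E3 ≃ₜ E3) (hinv : ∀ x, f (f x) = x)
    (hor : OrientPreserving f)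
    (E : Set E3) (hEclosed : IsClosed E) (hEnull : volume E = 0) (hEinv : f '' E = E)
    (hbilip : ∀ x ∈ Eᶜ, ∃ U : Set E3, IsOpen U ∧ x ∈ U ∧ U ⊆ Eᶜ ∧
      ∃ L : ℝ, 1 ≤ L ∧ ∀ a ∈ U, ∀ b ∈ U,
        L⁻¹ * dist a b ≤ dist (f a) (f b) ∧ dist (f a) (f b) ≤ L * dist a b) :
    (∀ᵐ x ∂volume, DifferentiableAt ℝ f x) ∧
    (∀ᵐ x ∂volume, 0 < jacDet f x) ∧
    ∀ p : ℝ, 1 ≤ p → p < 2 →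
      ∫⁻ x, ENNReal.ofReal (‖fderiv ℝ f x‖ ^ p) ∂volume =
        ∫⁻ y, ENNReal.ofReal (adjugateNorm f y ^ p / jacDet f y ^ (p - 1)) ∂volume := by
  have hbilip_ae : ∀ᵐ x, IsBilipschitzNear f x :=
    (measure_eq_zero_iff_ae_notMem.1 hEnull).mono fun x hx =>
      let ⟨U, hUo, hxU, _, L, hL, hU⟩ := hbilip x hx
      ⟨U, hUo.mem_nhds hxU, L, zero_lt_one.trans_le hL, hU⟩
  obtain ⟨hdiff, hpos, hint⟩ := involution_adjugate_identity_general
    (EuclideanSpace.basisFun (Fin 3) ℝ).toBasis f.continuous hinv (.of_forall hor) hbilip_ae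
  exact ⟨hdiff, hpos, fun p _ _ => by
    simpa only [adjugateNorm_eq_norm_adjugateCLM, jacDet] using hint p⟩
end
end
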